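/- For all integers p ≥ 4 and n ≥ 2, f(n, p, p−1) ≤ 2^{16·p·(log₂ n)^{1 − 1/(p−2)}·log₂ log₂ n}. -/

import Mathlib

/-- `fEG n p q` is the Erdős–Gyárfás function `f(n, p, q)`: the minimum number of colors
in a `(p,q)`-coloring of the complete graph `K_n`, i.e. the least `k` for which there is
an edge-coloring of `K_n` with colors in `Fin k` such that among the edges spanned by
every set of `p` vertices at least `q` distinct colors appear. -/
noncomputable def fEG (n p q : ℕ) : ℕ :=
  sInf {k : ℕ | ∃ c : Sym2 (Fin n) → Fin k,
    ∀ S : Finset (Fin n), S.card = p →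
      q ≤ (((S ×ˢ S).filter fun e => e.1 ≠ e.2).image fun e => c s(e.1, e.2)).card}

/-!
Extend an edge coloring to the diagonal by one extra color. A `(p, p - 1)`-coloring is then one
in which every `p`-set spans at least `p` colors. The stronger property that survives
a recursive construction is *stable expansion* on a vertex set `A`: the product of the coloring
on `A` with any coloring in which every finite set `T` spans at least `|T|` colors has this
property too.

Given colorings of `V₁` and `V`, color `V₁ × V` by the product color across distinct fibers over
`V₁`, and by the unordered pair of second coordinates within a fiber. If sets of size `k + 1`
stably expand in `V₁` and sets of size `k` in `V`, then sets `A` of size `k + 1` stably expand in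
`V₁ × V`: either `A` has at most `k` second coordinates, and the product coloring of the two
projections suffices, or its second coordinates are distinct, and `A` arises from its first
projection by splitting vertices along edges of private colors. Each such split preserves stable
expansion. For `k + 1 = 3` any coloring of `V` will do, since at most one fiber contains two
elements of `A`.

Starting from `Bool` with one color and taking `b`-fold powers of this construction `d + 1` times,
where `d + 3 = p`, gives `2 ^ b ^ (d + 1)` vertices and `2 ^ O((d + 1) * b ^ d * log b)` colors.
Hence `b` is chosen near `(log n) ^ (1 / (p - 2))`; if this is not large compared with
`p * log (log n)`, giving all edges distinct colors is good enough.
-/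

namespace ErdosGyarfas

open Finset

/-! ### Expansion and its stability under products -/

section Expansion

variable {V V' W C C' D : Type*}

open scoped Classical in
/-- The colors appearing on a finite set `S`. Colorings are functions of ordered pairs, and the
colors of the diagonal pairs `(x, x)` are counted. -/
noncomputable def colors (c : V → V → C) (S : Finset V) : Finset C :=
  image₂ c S S

/-- The Hall-type condition that every subset of `U` spans at least as many colors, diagonal
included, as it has elements. -/
def ExpandsOn (c : V → V → C) (U : Finset V) : Prop :=
  ∀ T ⊆ U, #T ≤ #(colors c T)

/-- The product of two colorings, which records the colors of both coordinates. -/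
def prodColoring (c : V → V → C) (e : W → W → D) : V × W → V × W → C × D :=
  fun x y => (c x.1 y.1, e x.2 y.2)

theorem mem_colors {c : V → V → C} {S : Finset V} {γ : C} :
    γ ∈ colors c S ↔ ∃ x ∈ S, ∃ y ∈ S, c x y = γ := by
  classical exact mem_image₂

theorem apply_mem_colors {c : V → V → C} {S : Finset V} {x y : V} (hx : x ∈ S) (hy : y ∈ S) :
    c x y ∈ colors c S :=
  mem_colors.2 ⟨x, hx, y, hy, rfl⟩

open scoped Classical in
theorem card_colors_image_le {c : V → V → C} {c' : V' → V' → C'} {φ : V → V'} (g : C → C')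
    {T : Finset V} (hg : ∀ x ∈ T, ∀ y ∈ T, c' (φ x) (φ y) = g (c x y)) :
    #(colors c' (T.image φ)) ≤ #(colors c T) := by
  suffices h : colors c' (T.image φ) ⊆ (colors c T).image g from
    (card_le_card h).trans card_image_le
  intro γ hγ
  simp only [mem_colors, exists_mem_image] at hγ
  obtain ⟨x, hx, y, hy, rfl⟩ := hγ
  exact mem_image.2 ⟨_, apply_mem_colors hx hy, (hg x hx y hy).symm⟩

theorem ExpandsOn.comap {c : V → V → C} {c' : V' → V' → C'} {A : Finset V} {A' : Finset V'}
    (h : ExpandsOn c' A') (φ : V → V') (g : C → C') (hmap : Set.MapsTo φ A A')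
    (hinj : Set.InjOn φ A) (hg : ∀ x ∈ A, ∀ y ∈ A, c' (φ x) (φ y) = g (c x y)) :
    ExpandsOn c A := by
  classical
  intro T hT
  have hsub : T.image φ ⊆ A' := image_subset_iff.2 fun x hx => hmap (hT hx)
  calc #T = #(T.image φ) := (card_image_of_injOn (hinj.mono hT)).symm
    _ ≤ #(colors c' (T.image φ)) := h _ hsub
    _ ≤ #(colors c T) := card_colors_image_le g fun x hx y hy => hg x (hT hx) y (hT hy)

theorem expandsOn_singleton (c : V → V → C) (v : V) : ExpandsOn c {v} := by
  intro T hT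
  rcases subset_singleton_iff.1 hT with rfl | rfl
  · simp
  · simp [colors]

end Expansion

universe u

variable {V V' V₁ W C C' C₁ D : Type u}

/-- Expansion on `A` is stable if the product with any expanding coloring still expands. -/
def StablyExpandsOn (c : V → V → C) (A : Finset V) : Prop :=
  ∀ ⦃W D : Type u⦄ (e : W → W → D) (U : Finset W),
    ExpandsOn e U → ExpandsOn (prodColoring c e) (A ×ˢ U)

theorem StablyExpandsOn.comap {c : V → V → C} {c' : V' → V' → C'} {A : Finset V}
    {A' : Finset V'} (h : StablyExpandsOn c' A') (φ : V → V') (g : C → C')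
    (hmap : Set.MapsTo φ A A') (hinj : Set.InjOn φ A)
    (hg : ∀ x ∈ A, ∀ y ∈ A, c' (φ x) (φ y) = g (c x y)) : StablyExpandsOn c A := by
  intro W D e U hU
  refine (h e U hU).comap (Prod.map φ id) (Prod.map g id) ?_ ?_ ?_
  · rw [coe_product, coe_product]
    exact hmap.prodMap (Set.mapsTo_id _)
  · rw [coe_product]
    exact hinj.prodMap (Set.injOn_id _)
  · intro x hx y hy
    exact Prod.ext (hg _ (mem_product.1 hx).1 _ (mem_product.1 hy).1) rfl

theorem StablyExpandsOn.prod {c : V → V → C} {c' : V' → V' → C'} {A : Finset V}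
    {A' : Finset V'} (h : StablyExpandsOn c A) (h' : StablyExpandsOn c' A') :
    StablyExpandsOn (prodColoring c c') (A ×ˢ A') := by
  intro W D e U hU
  refine (h _ _ (h' e U hU)).comap (Equiv.prodAssoc V V' W) (Equiv.prodAssoc C C' D) ?_
    (Equiv.injective _).injOn fun _ _ _ _ => rfl
  rintro ⟨⟨x, x'⟩, w⟩ hx
  simpa [and_assoc] using hx

theorem StablyExpandsOn.expandsOn {c : V → V → C} {A : Finset V} (h : StablyExpandsOn c A) :
    ExpandsOn c A :=
  (h (fun _ _ : PUnit => PUnit.unit) {PUnit.unit} (expandsOn_singleton _ _)).comap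
    (·, PUnit.unit) (·, PUnit.unit) (fun x hx => by simpa using hx)
    (Prod.mk_left_injective _).injOn fun _ _ _ _ => rfl

theorem stablyExpandsOn_of_card_le_one (c : V → V → C) {A : Finset V} (hA : #A ≤ 1) :
    StablyExpandsOn c A := by
  intro W D e U hU
  refine hU.comap Prod.snd Prod.snd (fun x hx => (mem_product.1 hx).2) ?_ fun _ _ _ _ => rfl
  intro x hx y hy hxy
  exact Prod.ext (card_le_one.1 hA _ (mem_product.1 hx).1 _ (mem_product.1 hy).1) hxy

/-! ### Splitting a vertex -/

section Split

variable {a₀ a₁ : V}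

open scoped Classical in
/-- The map that identifies the vertex `a₁` with `a₀` and fixes all other vertices. -/
noncomputable def merge (a₀ a₁ : V) : V → V :=
  Function.update id a₁ a₀

theorem merge_right (a₀ a₁ : V) : merge a₀ a₁ a₁ = a₀ := by
  classical exact Function.update_self ..

theorem merge_of_ne {x : V} (h : x ≠ a₁) : merge a₀ a₁ x = x := by
  classical exact Function.update_of_ne h ..

theorem merge_left (a₀ a₁ : V) : merge a₀ a₁ a₀ = a₀ := by
  rcases eq_or_ne a₀ a₁ with rfl | h
  · exact merge_right _ _
  · exact merge_of_ne h

theorem merge_eq_merge_iff {x y : V} :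
    merge a₀ a₁ x = merge a₀ a₁ y ↔ x = y ∨ (x = a₀ ∧ y = a₁) ∨ (x = a₁ ∧ y = a₀) := by
  by_cases hx : x = a₁ <;> by_cases hy : y = a₁ <;>
    grind [merge_right, merge_of_ne]

theorem apply_merge {β : Type*} {π : V → β} (hπ : π a₀ = π a₁) (x : V) :
    π (merge a₀ a₁ x) = π x := by
  rcases eq_or_ne x a₁ with rfl | h
  · rw [merge_right, hπ]
  · rw [merge_of_ne h]

open scoped Classical in
/-- The second coordinates `w` for which both `(a₀, w)` and `(a₁, w)` lie in `T`: exactly the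
points at which merging `a₁` into `a₀` loses an element of `T`. -/
noncomputable def commonSlice (a₀ a₁ : V) (T : Finset (V × W)) : Finset W :=
  {w ∈ T.image Prod.snd | (a₀, w) ∈ T ∧ (a₁, w) ∈ T}

theorem mem_commonSlice {T : Finset (V × W)} {w : W} :
    w ∈ commonSlice a₀ a₁ T ↔ (a₀, w) ∈ T ∧ (a₁, w) ∈ T := by
  simp only [commonSlice, mem_filter, mem_image, and_iff_right_iff_imp]
  exact fun h => ⟨_, h.1, rfl⟩

open scoped Classical in
theorem card_le_card_image_merge_add_card_commonSlice (a₀ a₁ : V) (T : Finset (V × W)) :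
    #T ≤ #(T.image (Prod.map (merge a₀ a₁) id)) + #(commonSlice a₀ a₁ T) := by
  set lost : Finset (V × W) := (commonSlice a₀ a₁ T).image (Prod.mk a₁)
  have mem_lost {w : W} (h₀ : (a₀, w) ∈ T) (h₁ : (a₁, w) ∈ T) : (a₁, w) ∈ lost :=
    mem_image_of_mem _ (mem_commonSlice.2 ⟨h₀, h₁⟩)
  have hinj : Set.InjOn (Prod.map (merge a₀ a₁) (id : W → W)) ↑(T \ lost) := by
    rintro ⟨x, w⟩ hx ⟨y, w'⟩ hy hxy
    obtain ⟨hxT, hx⟩ := mem_sdiff.1 hx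
    obtain ⟨hyT, hy⟩ := mem_sdiff.1 hy
    obtain ⟨hmerge, rfl⟩ : merge a₀ a₁ x = merge a₀ a₁ y ∧ w = w' := Prod.mk.inj hxy
    rcases merge_eq_merge_iff.1 hmerge with rfl | ⟨rfl, rfl⟩ | ⟨rfl, rfl⟩
    · rfl
    · exact absurd (mem_lost hxT hyT) hy
    · exact absurd (mem_lost hyT hxT) hx
  calc #T ≤ #(T \ lost) + #lost := card_le_card_sdiff_add_card
    _ = #((T \ lost).image (Prod.map (merge a₀ a₁) id)) + #lost := by
      rw [card_image_of_injOn hinj]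
    _ ≤ _ := add_le_add (card_le_card (image_subset_image sdiff_subset)) card_image_le

open scoped Classical in
/-- The colors `(c a₀ a₁, δ)`, for `δ` a color of the common slice, are lost in the merge: their
images are also the images of `(c a₀ a₀, δ)`. -/
theorem colors_image_merge_subset {c : V → V → C} {c' : V → V → C'} {e : W → W → D}
    {T : Finset (V × W)} (g : C → C') (hne : c a₀ a₀ ≠ c a₀ a₁)
    (hg : ∀ x ∈ T, ∀ y ∈ T, c' (merge a₀ a₁ x.1) (merge a₀ a₁ y.1) = g (c x.1 y.1)) :
    colors (prodColoring c' e) (T.image (Prod.map (merge a₀ a₁) id)) ⊆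
      (colors (prodColoring c e) T \
        (colors e (commonSlice a₀ a₁ T)).image (Prod.mk (c a₀ a₁))).image (Prod.map g id) := by
  intro γ hγ
  simp only [mem_colors, exists_mem_image] at hγ
  obtain ⟨x, hx, y, hy, rfl⟩ := hγ
  have hγ : prodColoring c' e (Prod.map (merge a₀ a₁) id x) (Prod.map (merge a₀ a₁) id y) =
      (g (c x.1 y.1), e x.2 y.2) := Prod.ext (hg x hx y hy) rfl
  rw [hγ]
  by_cases hxy :
      prodColoring c e x y ∈ (colors e (commonSlice a₀ a₁ T)).image (Prod.mk (c a₀ a₁))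
  · obtain ⟨_, hδ, hxy⟩ := mem_image.1 hxy
    obtain ⟨w, hw, w', hw', rfl⟩ := mem_colors.1 hδ
    obtain ⟨hc, he⟩ : c a₀ a₁ = c x.1 y.1 ∧ e w w' = e x.2 y.2 := Prod.mk.inj hxy
    obtain ⟨hw₀, -⟩ := mem_commonSlice.1 hw
    obtain ⟨hw₀', hw₁'⟩ := mem_commonSlice.1 hw'
    have hgc : g (c a₀ a₀) = g (c a₀ a₁) := by
      rw [← hg _ hw₀ _ hw₀', ← hg _ hw₀ _ hw₁', merge_left, merge_right]
    refine mem_image.2 ⟨(c a₀ a₀, e w w'), mem_sdiff.2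
      ⟨mem_colors.2 ⟨_, hw₀, _, hw₀', rfl⟩, ?_⟩, Prod.ext (hgc.trans (congrArg g hc)) he⟩
    intro hmem
    obtain ⟨_, _, h⟩ := mem_image.1 hmem
    exact hne (Prod.mk.inj h).1.symm
  · exact mem_image.2 ⟨_, mem_sdiff.2 ⟨apply_mem_colors hx hy, hxy⟩, rfl⟩

open scoped Classical in
theorem card_colors_image_merge_add_le {c : V → V → C} {c' : V → V → C'} {e : W → W → D}
    {T : Finset (V × W)} (g : C → C') (hne : c a₀ a₀ ≠ c a₀ a₁)
    (hg : ∀ x ∈ T, ∀ y ∈ T, c' (merge a₀ a₁ x.1) (merge a₀ a₁ y.1) = g (c x.1 y.1)) :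
    #(colors (prodColoring c' e) (T.image (Prod.map (merge a₀ a₁) id))) +
      #(colors e (commonSlice a₀ a₁ T)) ≤ #(colors (prodColoring c e) T) := by
  have hlost : (colors e (commonSlice a₀ a₁ T)).image (Prod.mk (c a₀ a₁)) ⊆
      colors (prodColoring c e) T := by
    simp only [image_subset_iff, mem_colors]
    rintro _ ⟨w, hw, w', hw', rfl⟩
    exact ⟨_, (mem_commonSlice.1 hw).1, _, (mem_commonSlice.1 hw').2, rfl⟩
  rw [← card_sdiff_add_card_eq_card hlost, card_image_of_injective _ (Prod.mk_right_injective _)]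
  exact Nat.add_le_add_right
    ((card_le_card (colors_image_merge_subset g hne hg)).trans card_image_le) _

open scoped Classical in
theorem StablyExpandsOn.split {c : V → V → C} {c' : V → V → C'} {A : Finset V}
    (h : StablyExpandsOn c' (A.erase a₁)) (g : C → C') (ha₀ : a₀ ∈ A) (ha : a₀ ≠ a₁)
    (hne : c a₀ a₀ ≠ c a₀ a₁)
    (hg : ∀ x ∈ A, ∀ y ∈ A, c' (merge a₀ a₁ x) (merge a₀ a₁ y) = g (c x y)) :
    StablyExpandsOn c A := by
  intro W D e U hU T hT
  have hA {t : V × W} (ht : t ∈ T) : t.1 ∈ A := (mem_product.1 (hT ht)).1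
  have hmerge {x : V} (hx : x ∈ A) : merge a₀ a₁ x ∈ A.erase a₁ := by
    rcases eq_or_ne x a₁ with rfl | hx₁
    · rw [merge_right]
      exact mem_erase.2 ⟨ha, ha₀⟩
    · rw [merge_of_ne hx₁]
      exact mem_erase.2 ⟨hx₁, hx⟩
  have hmerged : T.image (Prod.map (merge a₀ a₁) id) ⊆ A.erase a₁ ×ˢ U :=
    image_subset_iff.2 fun t ht => mem_product.2 ⟨hmerge (hA ht), (mem_product.1 (hT ht)).2⟩
  have hslice : commonSlice a₀ a₁ T ⊆ U := fun w hw =>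
    (mem_product.1 (hT (mem_commonSlice.1 hw).1)).2
  calc #T ≤ #(T.image (Prod.map (merge a₀ a₁) id)) + #(commonSlice a₀ a₁ T) :=
        card_le_card_image_merge_add_card_commonSlice a₀ a₁ T
    _ ≤ #(colors (prodColoring c' e) (T.image (Prod.map (merge a₀ a₁) id))) +
          #(colors e (commonSlice a₀ a₁ T)) :=
        add_le_add (h e U hU _ hmerged) (hU _ hslice)
    _ ≤ #(colors (prodColoring c e) T) :=
        card_colors_image_merge_add_le g hne fun x hx y hy => hg _ (hA hx) _ (hA hy)

end Split

/-! ### Rainbow fibers -/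

section Rainbow

open scoped Classical in
/-- The pullback of the coloring `c₁` along `π`, modified so that all edges inside the fibers of
`π` have distinct private colors. -/
noncomputable def rainbowFibers (π : V → V₁) (c₁ : V₁ → V₁ → C₁) : V → V → C₁ ⊕ Sym2 V :=
  fun x y => if π x = π y ∧ x ≠ y then Sum.inr s(x, y) else Sum.inl (c₁ (π x) (π y))

open scoped Classical in
theorem rainbowFibers_merge {π : V → V₁} (c₁ : V₁ → V₁ → C₁) {a₀ a₁ : V} (hπ : π a₀ = π a₁)
    (x y : V) :
    rainbowFibers π c₁ (merge a₀ a₁ x) (merge a₀ a₁ y) =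
      Sum.elim Sum.inl
        (fun s => if (s.map (merge a₀ a₁)).IsDiag then Sum.inl (c₁ (π a₀) (π a₀))
          else Sum.inr (s.map (merge a₀ a₁)))
        (rainbowFibers π c₁ x y) := by
  by_cases hxy : π x = π y ∧ x ≠ y
  · by_cases hm : merge a₀ a₁ x = merge a₀ a₁ y
    · have hx : π x = π a₀ := by
        rcases (merge_eq_merge_iff.1 hm).resolve_left hxy.2 with ⟨rfl, -⟩ | ⟨rfl, -⟩
        exacts [rfl, hπ.symm]
      simp [rainbowFibers, apply_merge hπ, hxy, hm, ← hx]
    · simp [rainbowFibers, apply_merge hπ, hxy, hm]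
  · have hm : ¬(π x = π y ∧ merge a₀ a₁ x ≠ merge a₀ a₁ y) := fun h =>
      hxy ⟨h.1, fun hxy => h.2 (congrArg _ hxy)⟩
    simp only [rainbowFibers, apply_merge hπ, if_neg hxy, if_neg hm, Sum.elim_inl]

theorem StablyExpandsOn.rainbowFibers {c₁ : V₁ → V₁ → C₁} {A₁ : Finset V₁}
    (h : StablyExpandsOn c₁ A₁) {π : V → V₁} {A : Finset V} (hmap : Set.MapsTo π A A₁) :
    StablyExpandsOn (rainbowFibers π c₁) A := by
  classical
  induction A using Finset.strongInduction with
  | H A ih =>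
    by_cases hinj : Set.InjOn π A
    · refine h.comap π (Sum.elim id fun s => c₁ (π s.out.1) (π s.out.2)) hmap hinj ?_
      intro x hx y hy
      have hxy : ¬(π x = π y ∧ x ≠ y) := fun h => h.2 (hinj hx hy h.1)
      simp only [ErdosGyarfas.rainbowFibers, if_neg hxy, Sum.elim_inl, id]
    · simp only [Set.InjOn, not_forall] at hinj
      obtain ⟨a₀, ha₀, a₁, ha₁, hπ, hne⟩ := hinj
      have hA : A.erase a₁ ⊂ A := erase_ssubset ha₁
      refine (ih _ hA (hmap.mono_left hA.subset)).split _ ha₀ hne ?_ fun x _ y _ =>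
        rainbowFibers_merge c₁ hπ x y
      simp [ErdosGyarfas.rainbowFibers, hπ, hne]

/-! ### The recursive construction -/

open scoped Classical in
/-- The coloring of `V₁ × V` by the product color across the fibers over `V₁`, and by the unordered
pair of second coordinates inside each fiber. -/
noncomputable def rainbowProd (c₁ : V₁ → V₁ → C₁) (c : V → V → C) :
    V₁ × V → V₁ × V → (C₁ × C) ⊕ Sym2 V :=
  fun x y => if x.1 = y.1 ∧ x ≠ y then Sum.inr s(x.2, y.2)
    else Sum.inl (prodColoring c₁ c x y)

/-- The coloring `c` of ordered pairs comes from an edge coloring of the complete graph, with the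
extra color `z` on the diagonal and nowhere else. -/
structure IsEdgeColoring (c : V → V → C) (z : C) : Prop where
  symm : ∀ x y, c x y = c y x
  eq_diag_iff : ∀ x y, c x y = z ↔ x = y

theorem IsEdgeColoring.apply_self {c : V → V → C} {z : C} (h : IsEdgeColoring c z) (x : V) :
    c x x = z :=
  (h.eq_diag_iff x x).2 rfl

theorem IsEdgeColoring.rainbowProd {c₁ : V₁ → V₁ → C₁} {c : V → V → C} {z₁ : C₁} {z : C}
    (h₁ : IsEdgeColoring c₁ z₁) (hsymm : ∀ x y, c x y = c y x) (hz : ∀ x, c x x = z) :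
    IsEdgeColoring (rainbowProd c₁ c) (Sum.inl (z₁, z)) where
  symm x y := by
    classical
    have hcomm : x.1 = y.1 ∧ x ≠ y ↔ y.1 = x.1 ∧ y ≠ x := and_congr eq_comm ne_comm
    simp only [ErdosGyarfas.rainbowProd, prodColoring, Sym2.eq_swap (a := x.2), h₁.symm x.1,
      hsymm x.2]
    exact if_congr hcomm rfl rfl
  eq_diag_iff x y := by
    constructor
    · intro h
      by_contra hxy
      by_cases hfst : x.1 = y.1
      · simp [ErdosGyarfas.rainbowProd, hfst, hxy] at h
      · simp [ErdosGyarfas.rainbowProd, prodColoring, hfst, h₁.eq_diag_iff] at h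
    · rintro rfl
      simp [ErdosGyarfas.rainbowProd, prodColoring, h₁.apply_self, hz]

open scoped Classical in
/-- If the pairs inside the fibers can be recovered from their second coordinates through `σ`, the
recursive coloring is at least as fine on `A` as the one with rainbow fibers. -/
theorem stablyExpandsOn_rainbowProd_of_section {c₁ : V₁ → V₁ → C₁} (c : V → V → C)
    {A : Finset (V₁ × V)} (h : StablyExpandsOn c₁ (A.image Prod.fst)) (σ : V → V₁ × V)
    (hσ : ∀ x ∈ A, ∀ y ∈ A, x.1 = y.1 → x ≠ y → σ x.2 = x) :
    StablyExpandsOn (rainbowProd c₁ c) A := by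
  have hfibers : StablyExpandsOn (rainbowFibers Prod.fst c₁) A :=
    h.rainbowFibers fun x hx => mem_image_of_mem _ hx
  refine hfibers.comap id (Sum.map Prod.fst (Sym2.map σ)) (Set.mapsTo_id _) (Set.injOn_id _) ?_
  intro x hx y hy
  by_cases hxy : x.1 = y.1 ∧ x ≠ y
  · simp only [id, rainbowFibers, rainbowProd, if_pos hxy, Sum.map_inr, Sym2.map_mk,
      hσ x hx y hy hxy.1 hxy.2, hσ y hy x hx hxy.1.symm hxy.2.symm]
  · simp only [id, rainbowFibers, rainbowProd, if_neg hxy, Sum.map_inl, prodColoring]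

open scoped Classical in
theorem stablyExpandsOn_rainbowProd_of_prod {c₁ : V₁ → V₁ → C₁} {c : V → V → C} {z₁ : C₁}
    (h₁ : IsEdgeColoring c₁ z₁) (hsymm : ∀ x y, c x y = c y x) {A : Finset (V₁ × V)}
    (hfst : StablyExpandsOn c₁ (A.image Prod.fst)) (hsnd : StablyExpandsOn c (A.image Prod.snd)) :
    StablyExpandsOn (rainbowProd c₁ c) A := by
  refine (hfst.prod hsnd).comap id (Sum.elim id fun s => (z₁, s.lift ⟨c, hsymm⟩))
    (fun x hx => mem_coe.2 (subset_product hx)) (Set.injOn_id _) ?_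
  intro x _ y _
  by_cases hxy : x.1 = y.1 ∧ x ≠ y
  · simp only [id, rainbowProd, if_pos hxy, Sum.elim_inr, prodColoring, Sym2.lift_mk,
      (h₁.eq_diag_iff _ _).2 hxy.1]
  · simp only [id, rainbowProd, if_neg hxy, Sum.elim_inl]

open scoped Classical in
theorem stablyExpandsOn_rainbowProd_of_injOn_snd {c₁ : V₁ → V₁ → C₁} (c : V → V → C)
    {A : Finset (V₁ × V)} (h : StablyExpandsOn c₁ (A.image Prod.fst))
    (hinj : Set.InjOn Prod.snd (A : Set (V₁ × V))) : StablyExpandsOn (rainbowProd c₁ c) A := by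
  rcases A.eq_empty_or_nonempty with rfl | ⟨a, -⟩
  · exact stablyExpandsOn_of_card_le_one _ (by simp)
  · have : Nonempty (V₁ × V) := ⟨a⟩
    exact stablyExpandsOn_rainbowProd_of_section c h (Function.invFunOn Prod.snd A)
      fun x hx _ _ _ _ => hinj.leftInvOn_invFunOn hx

theorem stablyExpandsOn_rainbowProd_of_card_le {c₁ : V₁ → V₁ → C₁} {c : V → V → C} {z₁ : C₁}
    {k : ℕ} (h₁ : IsEdgeColoring c₁ z₁) (hsymm : ∀ x y, c x y = c y x)
    (hs₁ : ∀ A : Finset V₁, #A ≤ k + 1 → StablyExpandsOn c₁ A)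
    (hs : ∀ A : Finset V, #A ≤ k → StablyExpandsOn c A)
    (A : Finset (V₁ × V)) (hA : #A ≤ k + 1) : StablyExpandsOn (rainbowProd c₁ c) A := by
  classical
  have hfst : StablyExpandsOn c₁ (A.image Prod.fst) := hs₁ _ (card_image_le.trans hA)
  by_cases hsnd : #(A.image Prod.snd) ≤ k
  · exact stablyExpandsOn_rainbowProd_of_prod h₁ hsymm hfst (hs _ hsnd)
  · refine stablyExpandsOn_rainbowProd_of_injOn_snd c hfst (card_image_iff.1 ?_)
    exact le_antisymm card_image_le (by omega)

theorem exists_fst_eq_of_card_le_three [Nonempty V₁] {A : Finset (V₁ × V)} (hA : #A ≤ 3) :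
    ∃ v, ∀ x ∈ A, ∀ y ∈ A, x.1 = y.1 → x ≠ y → x.1 = v := by
  classical
  by_cases hpair : ∃ a ∈ A, ∃ b ∈ A, a.1 = b.1 ∧ a ≠ b
  · obtain ⟨a, ha, b, hb, hab, hne⟩ := hpair
    refine ⟨a.1, fun x hx y hy hxy hne' => ?_⟩
    by_contra hfst
    have hcard : #{a, b, x, y} = 4 := by grind
    have hsub : {a, b, x, y} ⊆ A := by grind
    exact absurd (card_le_card hsub) (by omega)
  · exact ⟨Classical.arbitrary V₁, fun x hx y hy hxy hne =>
      absurd ⟨x, hx, y, hy, hxy, hne⟩ hpair⟩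

theorem stablyExpandsOn_rainbowProd_of_card_le_three {c₁ : V₁ → V₁ → C₁} (c : V → V → C)
    (hs₁ : ∀ A : Finset V₁, #A ≤ 3 → StablyExpandsOn c₁ A)
    (A : Finset (V₁ × V)) (hA : #A ≤ 3) : StablyExpandsOn (rainbowProd c₁ c) A := by
  classical
  rcases A.eq_empty_or_nonempty with rfl | ⟨a, -⟩
  · exact stablyExpandsOn_of_card_le_one _ (by simp)
  · have : Nonempty V₁ := ⟨a.1⟩
    obtain ⟨v, hv⟩ := exists_fst_eq_of_card_le_three hA
    exact stablyExpandsOn_rainbowProd_of_section c (hs₁ _ (card_image_le.trans hA)) (Prod.mk v)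
      fun x hx y hy hxy hne => Prod.ext (hv x hx y hy hxy hne).symm rfl

end Rainbow

/-! ### Counting vertices and colors -/

theorem natCard_sym2_le (V : Type*) [Finite V] : Nat.card (Sym2 V) ≤ Nat.card V ^ 2 := by
  rw [sq, ← Nat.card_prod]
  exact Nat.card_le_card_of_surjective _ Sym2.mk_surjective

theorem natCard_colors_rainbowProd_le (C₁ C V : Type*) [Finite C₁] [Finite C] [Finite V] :
    Nat.card ((C₁ × C) ⊕ Sym2 V) ≤ Nat.card C₁ * Nat.card C + Nat.card V ^ 2 := by
  rw [Nat.card_sum, Nat.card_prod]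
  exact Nat.add_le_add_left (natCard_sym2_le V) _

/-- Some edge coloring of the complete graph on `N` vertices stably expands on all vertex sets of
size at most `k` and uses at most `M` colors, including the diagonal color. -/
def HasStableColoring (k N M : ℕ) : Prop :=
  ∃ (V C : Type) (_ : Finite V) (_ : Finite C) (c : V → V → C) (z : C),
    IsEdgeColoring c z ∧ Nat.card V = N ∧ Nat.card C ≤ M ∧
      ∀ A : Finset V, #A ≤ k → StablyExpandsOn c A

theorem hasStableColoring_one_one (k : ℕ) : HasStableColoring k 1 1 :=
  ⟨Unit, Unit, inferInstance, inferInstance, fun _ _ => (), (), ⟨by simp, by simp⟩, by simp,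
    by simp, fun A _ => stablyExpandsOn_of_card_le_one _ (card_le_univ A)⟩

theorem HasStableColoring.one_le {k N M : ℕ} (h : HasStableColoring k N M) : 1 ≤ M := by
  obtain ⟨V, C, _, _, c, z, -, -, hM, -⟩ := h
  have : Nonempty C := ⟨z⟩
  exact Nat.card_pos.trans_le hM

theorem HasStableColoring.mono_colors {k N M M' : ℕ} (h : HasStableColoring k N M)
    (hM : M ≤ M') : HasStableColoring k N M' := by
  obtain ⟨V, C, hV, hC, c, z, hc, hN, hCM, hs⟩ := h
  exact ⟨V, C, hV, hC, c, z, hc, hN, hCM.trans hM, hs⟩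

theorem HasStableColoring.mul_two {N M : ℕ} (h : HasStableColoring 3 N M) :
    HasStableColoring 3 (N * 2) (M + 4) := by
  obtain ⟨V₁, C₁, _, _, c₁, z₁, h₁, hN, hM, hs₁⟩ := h
  refine ⟨V₁ × Bool, (C₁ × Unit) ⊕ Sym2 Bool, inferInstance, inferInstance,
    rainbowProd c₁ fun _ _ => (), _, h₁.rainbowProd (fun _ _ => rfl) fun _ => rfl, ?_, ?_,
    stablyExpandsOn_rainbowProd_of_card_le_three _ hs₁⟩
  · simp [hN]
  · refine (natCard_colors_rainbowProd_le C₁ Unit Bool).trans ?_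
    simpa using hM

theorem HasStableColoring.mul {k N M N' M' : ℕ} (h₁ : HasStableColoring (k + 1) N M)
    (h : HasStableColoring k N' M') :
    HasStableColoring (k + 1) (N * N') (M * M' + N' ^ 2) := by
  obtain ⟨V₁, C₁, _, _, c₁, z₁, h₁, rfl, hM, hs₁⟩ := h₁
  obtain ⟨V, C, _, _, c, z, h, rfl, hM', hs⟩ := h
  refine ⟨V₁ × V, (C₁ × C) ⊕ Sym2 V, inferInstance, inferInstance, rainbowProd c₁ c, _,
    h₁.rainbowProd h.symm h.apply_self, Nat.card_prod _ _, ?_,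
    stablyExpandsOn_rainbowProd_of_card_le h₁ h.symm hs₁ hs⟩
  exact (natCard_colors_rainbowProd_le C₁ C V).trans (by gcongr)

theorem hasStableColoring_three_two_pow (m : ℕ) : HasStableColoring 3 (2 ^ m) (1 + 4 * m) := by
  induction m with
  | zero => exact hasStableColoring_one_one 3
  | succ m ih => exact ih.mul_two

theorem HasStableColoring.pow {k N M : ℕ} (h : HasStableColoring k N M) (m : ℕ) :
    HasStableColoring (k + 1) (N ^ m) (M ^ m * (1 + m * N ^ 2)) := by
  induction m with
  | zero => simpa using hasStableColoring_one_one (k + 1)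
  | succ m ih =>
    refine (ih.mul h).mono_colors ?_
    calc M ^ m * (1 + m * N ^ 2) * M + N ^ 2
        ≤ M ^ m * (1 + m * N ^ 2) * M + M ^ (m + 1) * N ^ 2 := by
          gcongr
          exact Nat.le_mul_of_pos_left _ (pow_pos h.one_le _)
      _ = M ^ (m + 1) * (1 + (m + 1) * N ^ 2) := by ring

theorem hasStableColoring_two_pow {b l : ℕ} (hb : 1 ≤ b) (hl : b ≤ 2 ^ l) (d : ℕ) :
    HasStableColoring (d + 3) (2 ^ b ^ (d + 1)) (2 ^ ((d + 1) * b ^ d * (l + 3))) := by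
  induction d with
  | zero =>
    rw [zero_add, pow_one]
    refine (hasStableColoring_three_two_pow b).mono_colors ?_
    calc 1 + 4 * b ≤ 2 ^ l * 2 ^ 3 := by omega
      _ = 2 ^ ((0 + 1) * b ^ 0 * (l + 3)) := by ring
  | succ d ih =>
    rw [pow_succ b (d + 1), pow_mul 2]
    refine (ih.pow b).mono_colors ?_
    have hB : 1 ≤ b ^ (d + 1) := Nat.one_le_pow _ _ hb
    have hfactor : 1 + b * (2 ^ b ^ (d + 1)) ^ 2 ≤ 2 ^ (l + 1 + 2 * b ^ (d + 1)) :=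
      calc 1 + b * (2 ^ b ^ (d + 1)) ^ 2
          ≤ b * (2 ^ b ^ (d + 1)) ^ 2 + b * (2 ^ b ^ (d + 1)) ^ 2 := by
            gcongr
            exact Nat.mul_pos hb (by positivity)
        _ = 2 * b * (2 ^ b ^ (d + 1)) ^ 2 := by ring
        _ ≤ 2 * 2 ^ l * (2 ^ b ^ (d + 1)) ^ 2 := by gcongr
        _ = 2 ^ (l + 1 + 2 * b ^ (d + 1)) := by ring
    calc (2 ^ ((d + 1) * b ^ d * (l + 3))) ^ b * (1 + b * (2 ^ b ^ (d + 1)) ^ 2)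
        ≤ (2 ^ ((d + 1) * b ^ d * (l + 3))) ^ b * 2 ^ (l + 1 + 2 * b ^ (d + 1)) := by gcongr
      _ = 2 ^ ((d + 1) * b ^ (d + 1) * (l + 3) + (l + 1 + 2 * b ^ (d + 1))) := by
          rw [← pow_mul, ← pow_add]
          ring_nf
      _ ≤ 2 ^ ((d + 1 + 1) * b ^ (d + 1) * (l + 3)) := by
          refine Nat.pow_le_pow_right two_pos ?_
          nlinarith [Nat.mul_le_mul_right (l + 1) hB]

/-! ### Bounds on the Erdős–Gyárfás function -/

theorem fEG_le_natCard {n p q : ℕ} {C : Type*} [Finite C] [DecidableEq C] (c : Sym2 (Fin n) → C)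
    (hc : ∀ S : Finset (Fin n), #S = p → q ≤ #(S.offDiag.image fun e => c s(e.1, e.2))) :
    fEG n p q ≤ Nat.card C := by
  let toFin : C ≃ Fin (Nat.card C) := Finite.equivFin C
  refine Nat.sInf_le ⟨toFin ∘ c, fun S hS => (hc S hS).trans_eq ?_⟩
  have hoff : {e ∈ S ×ˢ S | e.1 ≠ e.2} = S.offDiag := by
    ext e
    simp [and_assoc]
  rw [hoff, ← card_image_of_injective _ toFin.injective, image_image]
  rfl

theorem fEG_le_one_of_lt {n p : ℕ} (q : ℕ) (h : n < p) : fEG n p q ≤ 1 := by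
  refine (fEG_le_natCard (fun _ => ()) fun S hS => ?_).trans_eq (by simp)
  have := card_le_univ S
  rw [Fintype.card_fin] at this
  omega

theorem fEG_le_sq {p q : ℕ} (n : ℕ) (hq : q ≤ p.choose 2) : fEG n p q ≤ n ^ 2 := by
  calc fEG n p q ≤ Nat.card (Sym2 (Fin n)) := fEG_le_natCard id fun S hS => by
        rw [← hS, ← Sym2.card_image_offDiag] at hq
        exact hq
    _ ≤ n ^ 2 := by simpa using natCard_sym2_le (Fin n)

theorem HasStableColoring.fEG_le {n p N M : ℕ} (h : HasStableColoring p N M) (hn : n ≤ N) :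
    fEG n p (p - 1) ≤ M := by
  classical
  obtain ⟨V, C, _, _, c, z, hc, rfl, hM, hs⟩ := h
  obtain ⟨f⟩ : Nonempty (Fin n ↪ V) := by
    have := Fintype.ofFinite V
    exact Function.Embedding.nonempty_of_card_le (by simpa using hn)
  refine (fEG_le_natCard (fun e => (e.map f).lift ⟨c, hc.symm⟩) fun S hS => ?_).trans hM
  have hexp : #S ≤ #(colors c (S.map f)) := by
    simpa using (hs (S.map f) (by simp [hS])).expandsOn _ Subset.rfl
  have hcolors : colors c (S.map f) ⊆
      insert z (S.offDiag.image fun e => (s(e.1, e.2).map f).lift ⟨c, hc.symm⟩) := by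
    intro γ hγ
    obtain ⟨_, hfx, _, hfy, rfl⟩ := mem_colors.1 hγ
    obtain ⟨x, hx, rfl⟩ := mem_map.1 hfx
    obtain ⟨y, hy, rfl⟩ := mem_map.1 hfy
    rcases eq_or_ne x y with rfl | hxy
    · exact mem_insert.2 (Or.inl (hc.apply_self _))
    · exact mem_insert_of_mem (mem_image.2 ⟨(x, y), mem_offDiag.2 ⟨hx, hy, hxy⟩, rfl⟩)
  have := (card_le_card hcolors).trans (card_insert_le _ _)
  omega

theorem fEG_le_two_pow {b l n : ℕ} (d : ℕ) (hb : 1 ≤ b) (hl : b ≤ 2 ^ l)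
    (hn : n ≤ 2 ^ b ^ (d + 1)) : fEG n (d + 3) (d + 2) ≤ 2 ^ ((d + 1) * b ^ d * (l + 3)) :=
  (hasStableColoring_two_pow hb hl d).fEG_le hn

/-! ### Choice of the parameters -/

open Real

theorem natCast_le_mul_logb_two {x : ℝ} {k m : ℕ} (hx : 2 ^ k ≤ x ^ m) :
    (k : ℝ) ≤ m * logb 2 x := by
  rw [← logb_pow, le_logb_iff_rpow_le one_lt_two (lt_of_lt_of_le (by positivity) hx)]
  rwa [rpow_natCast]

theorem half_le_logb_logb {n : ℕ} (hn : 3 ≤ n) : 1 / 2 ≤ logb 2 (logb 2 n) := by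
  have hn' : (3 : ℝ) ≤ n := by exact_mod_cast hn
  have hlog : 3 / 2 ≤ logb 2 n := by
    have := natCast_le_mul_logb_two (x := n) (k := 3) (m := 2) (by nlinarith)
    push_cast at this
    linarith
  have := natCast_le_mul_logb_two (x := logb 2 n) (k := 1) (m := 2) (by nlinarith)
  push_cast at this
  linarith

theorem natCeil_pow_le_three_mul_pow {b : ℝ} {d : ℕ} (hb : 0 < b) (hd : d ≤ b) :
    (⌈b⌉₊ : ℝ) ^ d ≤ 3 * b ^ d := by
  calc (⌈b⌉₊ : ℝ) ^ d ≤ (b + 1) ^ d := by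
        gcongr
        exact (Nat.ceil_lt_add_one hb.le).le
    _ = (1 / b + 1) ^ d * b ^ d := by
        rw [← mul_pow, add_mul, one_div_mul_cancel hb.ne', one_mul, add_comm]
    _ ≤ exp (1 / b) ^ d * b ^ d := by
        gcongr
        exact add_one_le_exp _
    _ = exp (d / b) * b ^ d := by rw [← exp_nat_mul, mul_one_div]
    _ ≤ exp 1 * b ^ d := by
        gcongr
        exact (div_le_one hb).2 hd
    _ ≤ 3 * b ^ d := by
        gcongr
        exact exp_one_lt_three.le

theorem clog_natCeil_le {b : ℝ} (hb : 1 ≤ b) : (Nat.clog 2 ⌈b⌉₊ : ℝ) ≤ logb 2 b + 2 := by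
  have hceil : (1 : ℝ) ≤ ⌈b⌉₊ := hb.trans (Nat.le_ceil b)
  have hceil' : (⌈b⌉₊ : ℝ) ≤ b * 2 := by linarith [Nat.ceil_lt_add_one (zero_le_one.trans hb)]
  calc (Nat.clog 2 ⌈b⌉₊ : ℝ) = ⌈logb 2 ⌈b⌉₊⌉₊ := by
        rw [← natCeil_logb_natCast, Nat.cast_ofNat]
    _ ≤ logb 2 ⌈b⌉₊ + 1 := (Nat.ceil_lt_add_one (logb_nonneg one_lt_two hceil)).le
    _ ≤ logb 2 (b * 2) + 1 := by
        gcongr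
        exact one_lt_two
    _ = logb 2 b + 2 := by
        rw [logb_mul (by positivity) two_ne_zero, logb_self_eq_one one_lt_two]
        ring

theorem fEG_le_two_rpow_of_le {b : ℝ} {d n : ℕ} (hb : 2 ≤ b) (hd : d ≤ b)
    (hn : 0 < n) (hbn : logb 2 n = b ^ (d + 1)) :
    (fEG n (d + 3) (d + 2) : ℝ) ≤ 2 ^ (18 * b ^ d * ((d + 1) * logb 2 b)) := by
  have hlog : 1 ≤ logb 2 b := (le_logb_iff_rpow_le one_lt_two (by linarith)).2 (by simpa using hb)
  have hn' : n ≤ 2 ^ ⌈b⌉₊ ^ (d + 1) := by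
    have : (n : ℝ) ≤ 2 ^ ((⌈b⌉₊ ^ (d + 1) : ℕ) : ℝ) := by
      rw [← logb_le_iff_le_rpow one_lt_two (by exact_mod_cast hn), hbn, Nat.cast_pow]
      gcongr
      exact Nat.le_ceil b
    rw [rpow_natCast] at this
    exact_mod_cast this
  have hfEG := fEG_le_two_pow d (Nat.one_le_ceil_iff.2 (by linarith))
    (Nat.le_pow_clog one_lt_two ⌈b⌉₊) hn'
  calc (fEG n (d + 3) (d + 2) : ℝ)
      ≤ 2 ^ (((d + 1) * ⌈b⌉₊ ^ d * (Nat.clog 2 ⌈b⌉₊ + 3) : ℕ) : ℝ) := by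
        rw [rpow_natCast]
        exact_mod_cast hfEG
    _ ≤ 2 ^ (18 * b ^ d * ((d + 1) * logb 2 b)) := by
        gcongr
        · exact one_le_two
        push_cast
        calc ((d : ℝ) + 1) * ⌈b⌉₊ ^ d * (Nat.clog 2 ⌈b⌉₊ + 3)
            ≤ (d + 1) * (3 * b ^ d) * (6 * logb 2 b) := by
              gcongr
              · exact natCeil_pow_le_three_mul_pow (by linarith) hd
              · linarith [clog_natCeil_le (one_le_two.trans hb)]
          _ = 18 * b ^ d * ((d + 1) * logb 2 b) := by ring

theorem fEG_le_two_rpow {b : ℝ} {d n : ℕ} (hb : 0 < b) (hn : 3 ≤ n)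
    (hbn : logb 2 n = b ^ (d + 1)) :
    (fEG n (d + 3) (d + 2) : ℝ) ≤ 2 ^ (16 * (d + 3) * b ^ d * logb 2 (logb 2 n)) := by
  have hloglog := half_le_logb_logb hn
  by_cases htriv : 2 * logb 2 n ≤ 16 * (d + 3) * b ^ d * logb 2 (logb 2 n)
  · have hchoose : d + 2 ≤ (d + 3).choose 2 := by
      rw [Nat.choose_succ_succ' (d + 2), Nat.choose_one_right]
      exact Nat.le_add_right _ _
    calc (fEG n (d + 3) (d + 2) : ℝ) ≤ (n : ℝ) ^ 2 := by exact_mod_cast fEG_le_sq n hchoose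
      _ = 2 ^ (2 * logb 2 n) := by
          rw [mul_comm, rpow_mul two_pos.le, rpow_logb two_pos (by norm_num) (by positivity),
            rpow_two]
      _ ≤ _ := rpow_le_rpow_of_exponent_le one_le_two htriv
  · have hlt : 8 * (d + 3) * logb 2 (logb 2 n) < b := by
      refine lt_of_mul_lt_mul_left ?_ (by positivity : 0 ≤ 2 * b ^ d)
      calc 2 * b ^ d * (8 * (d + 3) * logb 2 (logb 2 n))
          = 16 * (d + 3) * b ^ d * logb 2 (logb 2 n) := by ring
        _ < 2 * logb 2 n := not_le.1 htriv
        _ = 2 * b ^ d * b := by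
            rw [hbn]
            ring
    have hlarge : 4 * ((d : ℝ) + 3) < b := by nlinarith
    refine (fEG_le_two_rpow_of_le (by linarith) (by linarith) (by omega) hbn).trans ?_
    have hlogb : logb 2 (logb 2 n) = (d + 1) * logb 2 b := by
      rw [hbn, logb_pow, Nat.cast_add_one]
    rw [← hlogb]
    gcongr
    · exact one_le_two
    · linarith

end ErdosGyarfas

open Real ErdosGyarfas in
theorem stmt0_general (p n : ℕ) (hp : 3 ≤ p) (hn : 2 ≤ n) :
    (fEG n p (p - 1) : ℝ) ≤
      2 ^ (16 * (p : ℝ) * logb 2 n ^ (1 - 1 / ((p : ℝ) - 2)) * logb 2 (logb 2 n)) := by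
  rcases hn.eq_or_lt with rfl | hn
  · simpa using fEG_le_one_of_lt (p - 1) hp
  obtain ⟨d, rfl⟩ := Nat.exists_eq_add_of_le' hp
  have hlog : 0 < logb 2 n := logb_pos one_lt_two (by exact_mod_cast one_lt_two.trans hn)
  have hroot : logb 2 n = (logb 2 n ^ (1 / ((d : ℝ) + 1))) ^ (d + 1) := by
    rw [one_div, ← Nat.cast_add_one, rpow_inv_natCast_pow hlog.le d.succ_ne_zero]
  have hpow : logb 2 n ^ (1 - 1 / ((d : ℝ) + 1)) = (logb 2 n ^ (1 / ((d : ℝ) + 1))) ^ d := by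
    rw [← rpow_mul_natCast hlog.le]
    congr 1
    field_simp
    ring
  have hsub : ((d + 3 : ℕ) : ℝ) - 2 = d + 1 := by
    push_cast
    ring
  rw [hsub, hpow, Nat.cast_add, Nat.cast_ofNat]
  exact fEG_le_two_rpow (rpow_pos_of_pos hlog _) hn hroot

/-- **Theorem (Conlon–Fox–Lee–Sudakov).** For all integers `p ≥ 4` and `n ≥ 2`,
`f(n, p, p−1) ≤ 2 ^ (16 p (log₂ n)^{1 − 1/(p−2)} log₂ log₂ n)`. -/
theorem stmt0 (p n : ℕ) (hp : 4 ≤ p) (hn : 2 ≤ n) :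
    (fEG n p (p - 1) : ℝ) ≤
      (2 : ℝ) ^ (16 * (p : ℝ) * Real.logb 2 n ^ (1 - 1 / ((p : ℝ) - 2)) *
        Real.logb 2 (Real.logb 2 n)) :=
  stmt0_general p n (by omega) hn
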